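/- Let (W,{s,t}) be a Coxeter system of dihedral type I₂(m) with m = m_{s,t} < ∞, and let h be a pre-realization of W over an integral domain k. Let W′ be a reflection subgroup of W whose canonical generating set S′ = {s′, t′} has exactly two elements, let v be the order of s′t′, and assume v is finite and divides m. If binom(v,k)_{x(m/v)}(a_{s,t}, a_{t,s}) = 0 = binom(v,k)_{y(m/v)}(a_{s,t}, a_{t,s}) for all 1 ≤ k ≤ v−1, then h is an Abe realization for (W′,S′): for every reflection datum for (W′,S′), with Cartan pairings a_{s′,t′} = ⟨α_{s′}∨, α_{t′}⟩, one has binom(v,k)_x(a_{s′,t′}, a_{t′,s′}) = 0 = binom(v,k)_y(a_{s′,t′}, a_{t′,s′}) for all 1 ≤ k ≤ v−1. -/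

import Mathlib

/-!
Statement 11: in a finite dihedral Coxeter system `I₂(m)` with pre-realization `h`, if
`W'` is a rank-2 reflection subgroup with canonical generators `{s', t'}` and `v` is the
(finite) order of `s't'`, which divides `m`, and the `(m/v)`-twisted quantum binomial
coefficients vanish at `(a_{s,t}, a_{t,s})`, then `h` is an Abe realization for `(W', S')`.
-/

attribute [local instance] Classical.propDecidable

noncomputable section

namespace PaperStmt

/-- `ℤ[x,y]`. -/
abbrev A2 : Type := MvPolynomial (Fin 2) ℤ

/-- The variable `x`. -/
def varX : A2 := MvPolynomial.X 0

/-- The variable `y`. -/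
def varY : A2 := MvPolynomial.X 1

/-- The pair of two-colored quantum numbers `([n]_x, [n]_y)` for `n ∈ ℕ`. -/
def qPair : ℕ → A2 × A2
  | 0 => (0, 0)
  | 1 => (1, 1)
  | n + 2 =>
      (varX * (qPair (n + 1)).2 - (qPair n).1,
        varY * (qPair (n + 1)).1 - (qPair n).2)

/-- The two-colored quantum number `[n]_x`, `n ∈ ℤ` (the recursions of the paper, used in both
directions, force `[-n]_x = -[n]_x`). -/
def qX (n : ℤ) : A2 := if 0 ≤ n then (qPair n.toNat).1 else -(qPair (-n).toNat).1

/-- The two-colored quantum number `[n]_y`, `n ∈ ℤ`. -/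
def qY (n : ℤ) : A2 := if 0 ≤ n then (qPair n.toNat).2 else -(qPair (-n).toNat).2

/-- The `d`-twisted variable `x(d) = [d+1]_x − [d−1]_x`. -/
def twX (d : ℤ) : A2 := qX (d + 1) - qX (d - 1)

/-- The `d`-twisted variable `y(d) = [d+1]_y − [d−1]_y`. -/
def twY (d : ℤ) : A2 := qY (d + 1) - qY (d - 1)
/-- Substitution `x ↦ x(d), y ↦ y(d)` in `ℤ[x,y]`. -/
def twist (d : ℤ) (p : A2) : A2 := MvPolynomial.aeval ![twX d, twY d] p

/-- The two-colored quantum binomial coefficient `binom(n,j)_x`: the unique element of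
`ℤ[x,y]` whose product with `[1]_x [2]_x ⋯ [j]_x` is `[n]_x [n−1]_x ⋯ [n−j+1]_x`. -/
def qbinomX (n j : ℕ) : A2 :=
  if h : ∃ p : A2,
      p * ∏ i ∈ Finset.range j, qX ((i : ℤ) + 1) =
        ∏ i ∈ Finset.range j, qX ((n : ℤ) - (i : ℤ)) then
    h.choose
  else 0

/-- The two-colored quantum binomial coefficient `binom(n,j)_y`. -/
def qbinomY (n j : ℕ) : A2 :=
  if h : ∃ p : A2,
      p * ∏ i ∈ Finset.range j, qY ((i : ℤ) + 1) =
        ∏ i ∈ Finset.range j, qY ((n : ℤ) - (i : ℤ)) then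
    h.choose
  else 0

/-- Evaluation `p(a,b)` of `p ∈ ℤ[x,y]` in a commutative ring, at `x ↦ a`, `y ↦ b`. -/
def pev {k : Type*} [CommRing k] (a b : k) (p : A2) : k := MvPolynomial.aeval ![a, b] p
variable {B W : Type*} [Group W] {M : CoxeterMatrix B}

/-- A pre-realization of the Coxeter system `cs` over `k`: a `k`-module `V` with simple
coroots in `V` and simple roots in the dual `V* = Module.Dual k V`, such that the pairing of
each simple root with its coroot is `2`, the formula `s(v) = v − ⟨v, α_s⟩ α_s∨` defines a
representation `rep` of `W` on `V`, and each simple root is surjective onto `k`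
(Demazure surjectivity). -/
structure PreRealization (cs : CoxeterSystem M W) (k V : Type*)
    [CommRing k] [AddCommGroup V] [Module k V] where
  coroot : B → V
  root : B → Module.Dual k V
  rep : W →* Module.End k V
  root_coroot_eq_two : ∀ i : B, root i (coroot i) = 2
  rep_simple : ∀ (i : B) (v : V), rep (cs.simple i) v = v - root i v • coroot i
  root_surjective : ∀ i : B, Function.Surjective ⇑(root i)

variable {k V : Type*} [CommRing k] [AddCommGroup V] [Module k V] {cs : CoxeterSystem M W}

/-- The contragredient action of `W` on the dual `V*`. -/
def dAct (R : PreRealization cs k V) (w : W) (f : Module.Dual k V) : Module.Dual k V :=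
  f.comp (R.rep w⁻¹)

/-- The canonical (Deodhar–Dyer) generating set of a subset `A ⊆ W`:
`{t ∈ ℛ(W) : N(t) ∩ A = {t}}` where `N(x) = {r ∈ ℛ(W) : ℓ(xr) < ℓ(x)}`. -/
def canonicalGens (cs : CoxeterSystem M W) (A : Set W) : Set W :=
  {t : W | cs.IsReflection t ∧
    ({r : W | cs.IsReflection r ∧ cs.length (t * r) < cs.length t} ∩ A) = {t}}

/-- `W'` is a reflection subgroup: it is generated by the reflections it contains. -/
def IsReflectionSubgroup (cs : CoxeterSystem M W) (W' : Subgroup W) : Prop :=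
  W' = Subgroup.closure ((W' : Set W) ∩ {r : W | cs.IsReflection r})

/-- A reflection datum on a subset `A ⊆ W`: maps `w_•, r_•` with `t = w_t r_t w_t⁻¹` and
`ℓ(w_t r_t) > ℓ(w_t)` for all `t ∈ A`. -/
def IsReflectionDatum (cs : CoxeterSystem M W) (A : Set W) (wm : W → W) (rm : W → B) : Prop :=
  ∀ t ∈ A, t = wm t * cs.simple (rm t) * (wm t)⁻¹ ∧
    cs.length (wm t) < cs.length (wm t * cs.simple (rm t))

/-- The root `α_t = w_t · α_{r_t}` attached to `t` by a reflection datum. -/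
def datumRoot (R : PreRealization cs k V) (wm : W → W) (rm : W → B) (t : W) :
    Module.Dual k V :=
  dAct R (wm t) (R.root (rm t))

/-- The coroot `α_t∨ = w_t · α_{r_t}∨` attached to `t` by a reflection datum. -/
def datumCoroot (R : PreRealization cs k V) (wm : W → W) (rm : W → B) (t : W) : V :=
  R.rep (wm t) (R.coroot (rm t))

/-- The Cartan pairing `a_{t,t'} = ⟨α_t∨, α_{t'}⟩` attached to a reflection datum. -/
def cartan (R : PreRealization cs k V) (wm : W → W) (rm : W → B) (t t' : W) : k :=
  datumRoot R wm rm t' (datumCoroot R wm rm t)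

/-- The Cartan entry `a_{s,t} = ⟨α_s∨, α_t⟩` for simple reflections. -/
def cartanS (R : PreRealization cs k V) (s t : B) : k := R.root t (R.coroot s)

/-! ### Polynomial part -/

lemma qX_neg (n : ℤ) : qX (-n) = - qX n := by
  unfold qX
  rcases lt_trichotomy n 0 with h | h | h
  · rw [if_pos (by omega), if_neg (by omega)]; simp
  · subst h; simp [qPair]
  · rw [if_neg (by omega), if_pos (by omega)]; simp

lemma qY_neg (n : ℤ) : qY (-n) = - qY n := by
  unfold qY
  rcases lt_trichotomy n 0 with h | h | h
  · rw [if_pos (by omega), if_neg (by omega)]; simp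
  · subst h; simp [qPair]
  · rw [if_neg (by omega), if_pos (by omega)]; simp

lemma qX_nat (n : ℕ) : qX (n : ℤ) = (qPair n).1 := by simp [qX]
lemma qY_nat (n : ℕ) : qY (n : ℤ) = (qPair n).2 := by simp [qY]

lemma qXY_rec_nat (n : ℕ) : qX ((n : ℤ) + 1) = varX * qY n - qX ((n : ℤ) - 1) ∧
    qY ((n : ℤ) + 1) = varY * qX n - qY ((n : ℤ) - 1) := by
  cases n with
  | zero =>
    have h1 : qX (-1) = -1 := by rw [qX_neg]; simp [qX, qPair]
    have h2 : qY (-1) = -1 := by rw [qY_neg]; simp [qY, qPair]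
    simp [h1, h2]
    simp [qX, qY, qPair]
  | succ n =>
    have e1 : ((n + 1 : ℕ) : ℤ) + 1 = ((n + 2 : ℕ) : ℤ) := by push_cast; ring
    have e2 : ((n + 1 : ℕ) : ℤ) - 1 = (n : ℤ) := by push_cast; ring
    rw [e1, e2, qX_nat, qX_nat, qX_nat, qY_nat, qY_nat, qY_nat]
    simp [qPair]

lemma qXY_rec (n : ℤ) : qX (n + 1) = varX * qY n - qX (n - 1) ∧
    qY (n + 1) = varY * qX n - qY (n - 1) := by
  rcases Int.eq_nat_or_neg n with ⟨k, h | h⟩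
  · subst h; exact qXY_rec_nat k
  · subst h
    obtain ⟨h1, h2⟩ := qXY_rec_nat k
    have e1 : -(k : ℤ) + 1 = -((k : ℤ) - 1) := by ring
    have e2 : -(k : ℤ) - 1 = -((k : ℤ) + 1) := by ring
    rw [e1, e2, qX_neg, qX_neg, qY_neg, qY_neg, qX_neg, qY_neg, h1, h2]
    constructor <;> ring

lemma tw_rec (n : ℤ) : twX (n + 1) = varX * twY n - twX (n - 1) ∧
    twY (n + 1) = varY * twX n - twY (n - 1) := by
  unfold twX twY
  have h1 := qXY_rec (n + 1)
  have h2 := qXY_rec (n - 1)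
  simp only [add_sub_cancel_right, sub_add_cancel] at *
  rw [h1.1, h1.2]
  constructor
  · linear_combination (-1 : A2) * h2.1
  · linear_combination (-1 : A2) * h2.2

lemma twX_neg (n : ℤ) : twX (-n) = twX n := by
  unfold twX
  rw [show -n + 1 = -(n - 1) by ring, show -n - 1 = -(n + 1) by ring, qX_neg, qX_neg]; ring

lemma twY_neg (n : ℤ) : twY (-n) = twY n := by
  unfold twY
  rw [show -n + 1 = -(n - 1) by ring, show -n - 1 = -(n + 1) by ring, qY_neg, qY_neg]; ring

lemma tw_zero : twX 0 = 2 ∧ twY 0 = 2 := by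
  unfold twX twY
  rw [show (0 : ℤ) - 1 = -1 by norm_num, qX_neg, qY_neg]
  simp [qX, qY, qPair]; norm_num

lemma tw_one : twX 1 = varX ∧ twY 1 = varY := by
  unfold twX twY
  simp [qX, qY, qPair]

lemma tw_parity (j : ℕ) : twX (2 * j) = twY (2 * j) ∧
    varY * twX (2 * j + 1) = varX * twY (2 * j + 1) := by
  induction j with
  | zero => simp [tw_zero, tw_one, mul_comm]
  | succ j ih =>
    obtain ⟨h1, h2⟩ := ih
    have r1 := tw_rec (2 * j + 1)
    have r2 := tw_rec (2 * j + 2)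
    rw [show (2 * (j : ℤ) + 1 + 1) = 2 * j + 2 by ring,
      show (2 * (j : ℤ) + 1 - 1) = 2 * j by ring] at r1
    rw [show (2 * (j : ℤ) + 2 + 1) = 2 * j + 3 by ring,
      show (2 * (j : ℤ) + 2 - 1) = 2 * j + 1 by ring] at r2
    push_cast
    rw [show (2 * ((j : ℤ) + 1) + 1) = 2 * j + 3 by ring,
      show (2 * ((j : ℤ) + 1)) = 2 * j + 2 by ring]
    have h3 : twX (2 * j + 2) = twY (2 * j + 2) := by
      rw [r1.1, r1.2]; linear_combination (-1 : A2) * h2 - h1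
    refine ⟨h3, ?_⟩
    rw [r2.1, r2.2]
    linear_combination (- varX * varY) * h3 - h2

lemma tw_even {d : ℕ} (h : Even d) : twX d = twY d := by
  obtain ⟨j, rfl⟩ := h
  have := (tw_parity j).1
  rw [← two_mul]; push_cast; exact this

/-- One-variable version of the quantum numbers. -/
def pp : ℕ → Polynomial ℤ
  | 0 => 0
  | 1 => 1
  | n + 2 => (if Even n then 1 else Polynomial.X) * pp (n + 1) - pp n

/-- 1 for even numbers, 0 for odd numbers. -/
def ev (n : ℕ) : ℕ := if Even n then 1 else 0

/-- substitution `z ↦ xy`. -/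
def zs : Polynomial ℤ →ₐ[ℤ] A2 := Polynomial.aeval (varX * varY)

lemma qPair_eq (n : ℕ) : ((qPair n).1 = varX ^ ev n * zs (pp n) ∧
    (qPair n).2 = varY ^ ev n * zs (pp n)) ∧
    ((qPair (n + 1)).1 = varX ^ ev (n + 1) * zs (pp (n + 1)) ∧
    (qPair (n + 1)).2 = varY ^ ev (n + 1) * zs (pp (n + 1))) := by
  induction n with
  | zero => simp [qPair, pp, ev]
  | succ n ih =>
    refine ⟨ih.2, ?_⟩
    obtain ⟨⟨h1, h2⟩, h3, h4⟩ := ih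
    have hX : zs Polynomial.X = varX * varY := by simp [zs]
    rcases Nat.even_or_odd n with hn | hn
    · have e1 : ev n = 1 := by simp [ev, hn]
      have e2 : ev (n + 1) = 0 := by simp [ev, Nat.even_add_one, hn]
      have e3 : ev (n + 1 + 1) = 1 := by simp [ev, Nat.even_add_one, hn]
      simp only [qPair, pp, h1, h2, h3, h4, e1, e2, e3, hn, if_true, map_sub, map_mul, map_one]
      constructor <;> ring
    · have hn := Nat.not_even_iff_odd.2 hn
      have e1 : ev n = 0 := by simp [ev, hn]
      have e2 : ev (n + 1) = 1 := by simp [ev, Nat.even_add_one, hn]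
      have e3 : ev (n + 1 + 1) = 0 := by simp [ev, Nat.even_add_one, hn]
      simp only [qPair, pp, h1, h2, h3, h4, e1, e2, e3, hn, if_false, map_sub, map_mul, hX]
      constructor <;> ring

lemma qX_eq (n : ℕ) : qX (n : ℤ) = varX ^ ev n * zs (pp n) := by
  rw [qX_nat]; exact (qPair_eq n).1.1
lemma qY_eq (n : ℕ) : qY (n : ℤ) = varY ^ ev n * zs (pp n) := by
  rw [qY_nat]; exact (qPair_eq n).1.2

lemma pp_monic_aux (j : ℕ) : ((pp (2 * j + 1)).Monic ∧ (pp (2 * j + 1)).natDegree = j) ∧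
    ((pp (2 * j + 2)).Monic ∧ (pp (2 * j + 2)).natDegree = j) := by
  induction j with
  | zero => simp [pp]
  | succ j ih =>
    obtain ⟨⟨h1, d1⟩, h2, d2⟩ := ih
    have r1 : pp (2 * (j + 1) + 1) = Polynomial.X * pp (2 * j + 2) - pp (2 * j + 1) := by
      rw [show 2 * (j + 1) + 1 = (2 * j + 1) + 2 by ring, pp, if_neg (by simp [Nat.even_add_one])]
    have r2 : pp (2 * (j + 1) + 2) = pp (2 * (j + 1) + 1) - pp (2 * j + 2) := by
      rw [show 2 * (j + 1) + 2 = (2 * j + 2) + 2 by ring, pp, if_pos (by simp [Nat.even_add_one]),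
        one_mul, show 2 * (j + 1) + 1 = 2 * j + 2 + 1 by ring]
    have m3 : (Polynomial.X * pp (2 * j + 2)).Monic := Polynomial.monic_X.mul h2
    have d3 : (Polynomial.X * pp (2 * j + 2)).natDegree = j + 1 := by
      rw [Polynomial.natDegree_X_mul h2.ne_zero, d2]
    have lt : (pp (2 * j + 1)).degree < (Polynomial.X * pp (2 * j + 2)).degree :=
      Polynomial.degree_lt_degree (by omega)
    have A : (pp (2 * (j + 1) + 1)).Monic := by rw [r1]; exact m3.sub_of_left lt
    have B : (pp (2 * (j + 1) + 1)).natDegree = j + 1 := by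
      rw [r1, Polynomial.natDegree_sub_eq_left_of_natDegree_lt (by omega), d3]
    refine ⟨⟨A, B⟩, ?_, ?_⟩
    · rw [r2]; exact A.sub_of_left (Polynomial.degree_lt_degree (by omega))
    · rw [r2, Polynomial.natDegree_sub_eq_left_of_natDegree_lt (by omega), B]

lemma pp_monic (n : ℕ) : (pp (n + 1)).Monic := by
  rcases Nat.even_or_odd' n with ⟨j, h | h⟩
  · subst h; exact (pp_monic_aux j).1.1
  · subst h; exact (pp_monic_aux j).2.1

lemma ev_eq (n : ℕ) : ev n = 1 - n % 2 := by
  unfold ev; split_ifs with h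
  · rw [Nat.even_iff] at h; omega
  · rw [Nat.not_even_iff] at h; omega

lemma ev_sums (n j : ℕ) (h : j ≤ n) : ∑ i ∈ Finset.range j, ev (i + 1) = j / 2 ∧
    ∑ i ∈ Finset.range j, ev (n - i) = n / 2 - (n - j) / 2 := by
  induction j with
  | zero => simp
  | succ j ih =>
    obtain ⟨h1, h2⟩ := ih (by omega)
    rw [Finset.sum_range_succ, Finset.sum_range_succ, h1, h2, ev_eq, ev_eq]
    omega

lemma varX_ne : varX ≠ 0 := MvPolynomial.X_ne_zero _
lemma varY_ne : varY ≠ 0 := MvPolynomial.X_ne_zero _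

lemma zs_inj {p : Polynomial ℤ} (h : zs p = 0) : p = 0 := by
  have := congrArg (MvPolynomial.aeval ![(1 : Polynomial ℤ), Polynomial.X]) h
  simpa [zs, ← Polynomial.aeval_algHom_apply, varX, varY] using this

/-- key divisibility: with `x ^ e` with `e ≤ 1`. `c`, `c'` are the two variables. -/
lemma div_lemma (c : A2) (f : A2 →ₐ[ℤ] Polynomial ℤ) (hc : f c = 1)
    (hf : f (varX * varY) = Polynomial.X) (D N : Polynomial ℤ) (hD : D.Monic) (a e : ℕ) (p : A2)
    (hp : p * (c ^ a * zs D) = c ^ (a + e) * zs N) : ∃ Q, N = D * Q ∧ p = c ^ e * zs Q := by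
  have hz : ∀ q, f (zs q) = q := by
    intro q
    rw [zs, ← Polynomial.aeval_algHom_apply, hf]; simp
  have h2 := congrArg f hp
  simp only [map_mul, map_pow, hc, hz, one_pow, one_mul] at h2
  refine ⟨f p, by rw [← h2]; ring, ?_⟩
  have hc0 : c ≠ 0 := by rintro rfl; simp at hc
  have hD0 : zs D ≠ 0 := fun h => hD.ne_zero (zs_inj h)
  apply mul_right_cancel₀ (mul_ne_zero (pow_ne_zero a hc0) hD0)
  rw [hp, ← h2, map_mul]; ring

lemma qbinom_form (n j : ℕ) (h : j ≤ n) : ∃ e, e ≤ 1 ∧ ∃ Q : Polynomial ℤ,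
    qbinomX n j = varX ^ e * zs Q ∧ qbinomY n j = varY ^ e * zs Q := by
  obtain ⟨s1, s2⟩ := ev_sums n j h
  set D := ∏ i ∈ Finset.range j, pp (i + 1) with hDdef
  set N := ∏ i ∈ Finset.range j, pp (n - i) with hNdef
  have hD : D.Monic := Polynomial.monic_prod_of_monic _ _ (fun i _ => pp_monic i)
  obtain ⟨e, he, hab⟩ : ∃ e, e ≤ 1 ∧ n / 2 - (n - j) / 2 = j / 2 + e :=
    ⟨n / 2 - (n - j) / 2 - j / 2, by omega, by omega⟩
  have X1 : ∏ i ∈ Finset.range j, qX ((i : ℤ) + 1) = varX ^ (j / 2) * zs D := by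
    rw [← s1, ← Finset.prod_pow_eq_pow_sum, hDdef, map_prod, ← Finset.prod_mul_distrib]
    refine Finset.prod_congr rfl fun i _ => ?_
    rw [← qX_eq]; push_cast; rfl
  have Y1 : ∏ i ∈ Finset.range j, qY ((i : ℤ) + 1) = varY ^ (j / 2) * zs D := by
    rw [← s1, ← Finset.prod_pow_eq_pow_sum, hDdef, map_prod, ← Finset.prod_mul_distrib]
    refine Finset.prod_congr rfl fun i _ => ?_
    rw [← qY_eq]; push_cast; rfl
  have X2 : ∏ i ∈ Finset.range j, qX ((n : ℤ) - (i : ℤ)) = varX ^ (j / 2 + e) * zs N := by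
    rw [← hab, ← s2, ← Finset.prod_pow_eq_pow_sum, hNdef, map_prod, ← Finset.prod_mul_distrib]
    refine Finset.prod_congr rfl fun i hi => ?_
    rw [← qX_eq, Nat.cast_sub (by have := Finset.mem_range.1 hi; omega)]
  have Y2 : ∏ i ∈ Finset.range j, qY ((n : ℤ) - (i : ℤ)) = varY ^ (j / 2 + e) * zs N := by
    rw [← hab, ← s2, ← Finset.prod_pow_eq_pow_sum, hNdef, map_prod, ← Finset.prod_mul_distrib]
    refine Finset.prod_congr rfl fun i hi => ?_
    rw [← qY_eq, Nat.cast_sub (by have := Finset.mem_range.1 hi; omega)]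
  refine ⟨e, he, ?_⟩
  unfold qbinomX qbinomY
  rw [X1, X2, Y1, Y2]
  have kX := div_lemma varX (MvPolynomial.aeval ![(1 : Polynomial ℤ), Polynomial.X])
    (by simp [varX]) (by simp [varX, varY]) D N hD (j / 2) e
  have kY := div_lemma varY (MvPolynomial.aeval ![Polynomial.X, (1 : Polynomial ℤ)])
    (by simp [varY]) (by simp [varX, varY]) D N hD (j / 2) e
  by_cases hN : ∃ Q, N = D * Q
  · obtain ⟨Q, hQ⟩ := hN
    have eX : ∃ p : A2, p * (varX ^ (j / 2) * zs D) = varX ^ (j / 2 + e) * zs N :=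
      ⟨varX ^ e * zs Q, by rw [hQ, map_mul]; ring⟩
    have eY : ∃ p : A2, p * (varY ^ (j / 2) * zs D) = varY ^ (j / 2 + e) * zs N :=
      ⟨varY ^ e * zs Q, by rw [hQ, map_mul]; ring⟩
    rw [dif_pos eX, dif_pos eY]
    obtain ⟨Q1, hQ1, r1⟩ := kX _ eX.choose_spec
    obtain ⟨Q2, hQ2, r2⟩ := kY _ eY.choose_spec
    have : Q1 = Q2 := mul_left_cancel₀ hD.ne_zero (hQ1.symm.trans hQ2)
    subst this
    exact ⟨Q1, r1, r2⟩
  · refine ⟨0, ?_, ?_⟩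
    · rw [dif_neg]
      · simp
      · rintro ⟨p, hp⟩; obtain ⟨Q, hQ, _⟩ := kX p hp; exact hN ⟨Q, hQ⟩
    · rw [dif_neg]
      · simp
      · rintro ⟨p, hp⟩; obtain ⟨Q, hQ, _⟩ := kY p hp; exact hN ⟨Q, hQ⟩

lemma pev_zs {k : Type*} [CommRing k] (a b : k) (Q : Polynomial ℤ) :
    pev a b (zs Q) = Polynomial.aeval (a * b) Q := by
  simp [pev, zs, ← Polynomial.aeval_algHom_apply, varX, varY]

lemma pev_twist {k : Type*} [CommRing k] (a b : k) (d : ℤ) (p : A2) :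
    pev a b (twist d p) = pev (pev a b (twX d)) (pev a b (twY d)) p := by
  unfold pev twist
  rw [← AlgHom.comp_apply]
  congr 1
  apply MvPolynomial.algHom_ext
  intro i
  fin_cases i <;> simp

lemma transfer {k : Type*} [CommRing k] [IsDomain k] (a b X Y : k) (hprod : a * b = X * Y)
    (hz : X = 0 → Y = 0 → a = 0 ∧ b = 0) (n j : ℕ) (h : j ≤ n)
    (h1 : pev X Y (qbinomX n j) = 0) (h2 : pev X Y (qbinomY n j) = 0) :
    pev a b (qbinomX n j) = 0 ∧ pev a b (qbinomY n j) = 0 := by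
  obtain ⟨e, he, Q, q1, q2⟩ := qbinom_form n j h
  have key : ∀ u w : k, pev u w (varX ^ e * zs Q) = u ^ e * Polynomial.aeval (u * w) Q ∧
      pev u w (varY ^ e * zs Q) = w ^ e * Polynomial.aeval (u * w) Q := by
    intro u w
    rw [← pev_zs]
    simp [pev, varX, varY]
  rw [q1, (key _ _).1] at h1
  rw [q2, (key _ _).2] at h2
  rw [q1, q2, (key _ _).1, (key _ _).2, hprod]
  by_cases hQ : Polynomial.aeval (X * Y) Q = 0
  · simp [hQ]
  · have h1 := (mul_eq_zero.1 h1).resolve_right hQ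
    have h2 := (mul_eq_zero.1 h2).resolve_right hQ
    have he0 : e ≠ 0 := by rintro rfl; simp at h1
    obtain ⟨r1, r2⟩ := hz (pow_eq_zero_iff he0 |>.1 h1) (pow_eq_zero_iff he0 |>.1 h2)
    simp [r1, r2, he0]

/-! ### Group part -/

/-- the rotation -/
def rot (cs : CoxeterSystem M W) (s t : B) : W := cs.simple s * cs.simple t

lemma rot_zpow_t (cs : CoxeterSystem M W) (s t : B) (n : ℤ) :
    rot cs s t ^ n * cs.simple t = rot cs s t ^ (n - 1) * cs.simple s := by
  rw [zpow_sub_one]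
  simp [rot, mul_assoc]

lemma rot_zpow_st (cs : CoxeterSystem M W) (s t : B) (n : ℤ) :
    rot cs s t ^ n * cs.simple s * cs.simple t = rot cs s t ^ (n + 1) := by
  rw [zpow_add_one, mul_assoc]; rfl

lemma s_rot (cs : CoxeterSystem M W) (s t : B) (n : ℤ) :
    cs.simple s * rot cs s t ^ n = rot cs s t ^ (-n) * cs.simple s := by
  have : SemiconjBy (cs.simple s) (rot cs s t) (rot cs s t)⁻¹ := by
    simp [SemiconjBy, rot, mul_assoc]
  have := this.zpow_right n
  rw [zpow_neg, ← inv_zpow]; exact this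

/-- product of two reflections -/
lemma refl_mul (cs : CoxeterSystem M W) (s t : B) (n k : ℤ) :
    (rot cs s t ^ n * cs.simple s) * (rot cs s t ^ k * cs.simple s) = rot cs s t ^ (n - k) := by
  rw [mul_assoc, ← mul_assoc (cs.simple s), s_rot, mul_assoc, cs.simple_mul_simple_self, mul_one,
    ← zpow_add, sub_eq_add_neg]

lemma word_form (cs : CoxeterSystem M W) (s t : B) (hdih : ∀ i : B, i = s ∨ i = t) (ω : List B) :
    (∃ n : ℤ, cs.wordProd ω = rot cs s t ^ n ∧ |2 * n| ≤ ω.length ∧ ω.length % 2 = 0) ∨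
    (∃ n : ℤ, cs.wordProd ω = rot cs s t ^ n * cs.simple s ∧ |2 * n + 1| ≤ ω.length ∧
      ω.length % 2 = 1) := by
  induction ω using List.reverseRecOn with
  | nil => left; exact ⟨0, by simp⟩
  | append_singleton ω i ih =>
    rw [cs.wordProd_append, cs.wordProd_singleton, List.length_append, List.length_singleton]
    push_cast
    rcases ih with ⟨n, h, hb, hp⟩ | ⟨n, h, hb, hp⟩ <;> rw [h] <;> rw [abs_le] at hb <;>
      rcases hdih i with rfl | rfl
    · right; exact ⟨n, rfl, by rw [abs_le]; omega, by omega⟩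
    · right; exact ⟨n - 1, rot_zpow_t _ _ _ _, by rw [abs_le]; omega, by omega⟩
    · left; exact ⟨n, by simp, by rw [abs_le]; omega, by omega⟩
    · left; exact ⟨n + 1, rot_zpow_st _ _ _ _, by rw [abs_le]; omega, by omega⟩

lemma elt_form (cs : CoxeterSystem M W) (s t : B) (hdih : ∀ i : B, i = s ∨ i = t) (w : W) :
    (∃ n : ℤ, w = rot cs s t ^ n) ∨ (∃ n : ℤ, w = rot cs s t ^ n * cs.simple s) := by
  obtain ⟨ω, rfl⟩ := cs.wordProd_surjective w
  rcases word_form cs s t hdih ω with ⟨n, h, _⟩ | ⟨n, h, _⟩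
  · exact Or.inl ⟨n, h⟩
  · exact Or.inr ⟨n, h⟩

lemma refl_form (cs : CoxeterSystem M W) (s t : B) (hdih : ∀ i : B, i = s ∨ i = t) (w : W)
    (hw : cs.IsReflection w) :
    ∃ n : ℤ, w = rot cs s t ^ n * cs.simple s ∧ |2 * n + 1| ≤ cs.length w := by
  obtain ⟨ω, hred, hω⟩ := cs.exists_isReduced w
  have hodd := hw.odd_length
  have hl : cs.length w = ω.length := by rw [hω]; exact hred
  rcases word_form cs s t hdih ω with ⟨n, h, _, hp⟩ | ⟨n, h, hb, hp⟩
  · rw [hl, Nat.odd_iff] at hodd; omega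
  · exact ⟨n, hω.trans h, by rw [hl]; exact hb⟩

lemma length_rot_nat (cs : CoxeterSystem M W) (s t : B) (n : ℕ) :
    cs.length (rot cs s t ^ n) ≤ 2 * n := by
  induction n with
  | zero => simp
  | succ n ih =>
    rw [pow_succ]
    have h1 := cs.length_mul_le (rot cs s t ^ n) (rot cs s t)
    have h2 := cs.length_mul_le (cs.simple s) (cs.simple t)
    rw [cs.length_simple, cs.length_simple] at h2
    change cs.length (rot cs s t) ≤ _ at h2
    omega

lemma isRefl_rot (cs : CoxeterSystem M W) (s t : B) (n : ℤ) :
    cs.IsReflection (rot cs s t ^ n * cs.simple s) := by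
  rcases Int.even_or_odd' n with ⟨j, h | h⟩
  · refine ⟨rot cs s t ^ j, s, ?_⟩
    rw [← zpow_neg, mul_assoc, s_rot, neg_neg, ← mul_assoc, ← zpow_add]; congr 2; omega
  · refine ⟨rot cs s t ^ (j + 1), t, ?_⟩
    rw [← zpow_neg, rot_zpow_t, mul_assoc, s_rot, neg_neg, ← mul_assoc, ← zpow_add]; congr 2; omega

lemma order_gcd {G : Type*} [Group G] (g : G) (e : ℤ) (hm : orderOf g ≠ 0) :
    orderOf g / orderOf (g ^ e) = Nat.gcd (orderOf g) e.natAbs := by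
  have h1 : orderOf (g ^ e) = orderOf (g ^ e.natAbs) := by
    rcases Int.natAbs_eq e with h | h
    · conv_lhs => rw [h, zpow_natCast]
    · conv_lhs => rw [h, zpow_neg, orderOf_inv, zpow_natCast]
  rw [h1]
  have hf : IsOfFinOrder g := by rwa [← orderOf_pos_iff, Nat.pos_iff_ne_zero]
  rw [hf.orderOf_pow]
  exact Nat.div_div_self (Nat.gcd_dvd_left _ _) hm

/-- Canonical generators lie near the origin. -/
lemma canon_bound (cs : CoxeterSystem M W) (s t : B) (hdih : ∀ i : B, i = s ∨ i = t)
    (W' : Subgroup W) (d : ℕ) (hd : rot cs s t ^ d ∈ W') (hd1 : rot cs s t ^ d ≠ 1) (w : W)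
    (hw : w ∈ canonicalGens cs (W' : Set W)) :
    ∃ n : ℤ, w = rot cs s t ^ n * cs.simple s ∧ -(d : ℤ) ≤ n ∧ n < d := by
  obtain ⟨hr, hN⟩ := hw
  obtain ⟨n, hn, hb⟩ := refl_form cs s t hdih w hr
  have hwW : w ∈ W' := by
    have : w ∈ ({w} : Set W) := rfl
    rw [← hN] at this; exact this.2
  have hlen := length_rot_nat cs s t d
  have key : ∀ k : ℤ, rot cs s t ^ k * cs.simple s ∈ W' →
      cs.length (rot cs s t ^ (n - k)) < cs.length w → rot cs s t ^ (n - k) = 1 := by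
    intro k hk hl
    have : rot cs s t ^ k * cs.simple s ∈ ({w} : Set W) := by
      rw [← hN]
      exact ⟨⟨isRefl_rot cs s t k, by rw [← refl_mul, ← hn] at hl; exact hl⟩, hk⟩
    rw [← refl_mul, ← hn, Set.mem_singleton_iff.1 this]
    exact hr.mul_self
  refine ⟨n, hn, ?_, ?_⟩
  · by_contra hlt
    push Not at hlt
    have := key (n + d) (by
      rw [add_comm, zpow_add, mul_assoc, ← hn, zpow_natCast]; exact W'.mul_mem hd hwW) (by
      rw [show n - (n + d) = -(d : ℤ) by ring, zpow_neg, zpow_natCast, cs.length_inv]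
      rw [abs_le'] at hb; omega)
    rw [show n - (n + d) = -(d : ℤ) by ring, zpow_neg, zpow_natCast, inv_eq_one] at this
    exact hd1 this
  · by_contra hlt
    push Not at hlt
    have := key (n - d) (by
      rw [sub_eq_add_neg, add_comm, zpow_add, mul_assoc, ← hn, zpow_neg, zpow_natCast]
      exact W'.mul_mem (W'.inv_mem hd) hwW) (by
      rw [show n - (n - d) = (d : ℤ) by ring, zpow_natCast]
      rw [abs_le'] at hb; omega)
    rw [show n - (n - d) = (d : ℤ) by ring, zpow_natCast] at this
    exact hd1 this

lemma canon_diff (cs : CoxeterSystem M W) (s t : B) (hdih : ∀ i : B, i = s ∨ i = t)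
    (hm : orderOf (rot cs s t) ≠ 0)
    (W' : Subgroup W) (s' t' : W) (hne : s' ≠ t')
    (hs : s' ∈ canonicalGens cs (W' : Set W)) (ht : t' ∈ canonicalGens cs (W' : Set W)) :
    ∃ n n' : ℤ, s' = rot cs s t ^ n * cs.simple s ∧ t' = rot cs s t ^ n' * cs.simple s ∧
      (n - n' = (orderOf (rot cs s t) / orderOf (s' * t') : ℕ) ∨
       n - n' = -(orderOf (rot cs s t) / orderOf (s' * t') : ℕ)) := by
  obtain ⟨n0, hn0, -⟩ := refl_form cs s t hdih s' hs.1
  obtain ⟨n0', hn0', -⟩ := refl_form cs s t hdih t' ht.1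
  have mem : ∀ w ∈ canonicalGens cs (W' : Set W), w ∈ W' := by
    rintro w ⟨-, hN⟩
    have : w ∈ ({w} : Set W) := rfl
    rw [← hN] at this; exact this.2
  set ρ := rot cs s t with hρ
  have hst : s' * t' = ρ ^ (n0 - n0') := by rw [hn0, hn0', refl_mul]
  have hmem : ρ ^ (n0 - n0') ∈ W' := by rw [← hst]; exact W'.mul_mem (mem _ hs) (mem _ ht)
  set d := orderOf ρ / orderOf (s' * t') with hd
  have hgcd : d = Nat.gcd (orderOf ρ) (n0 - n0').natAbs := by
    rw [hd, hst]; exact order_gcd _ _ hm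
  have hdm : (d : ℤ) ∣ orderOf ρ := by
    rw [hgcd]; exact_mod_cast Nat.gcd_dvd_left _ _
  have hρd : ρ ^ d ∈ W' := by
    have h1 : (d : ℤ) = Int.gcd (orderOf ρ) (n0 - n0') := by rw [hgcd]; rfl
    rw [← zpow_natCast, h1, Int.gcd_eq_gcd_ab, zpow_add, zpow_mul, zpow_mul, zpow_natCast,
      pow_orderOf_eq_one, one_zpow, one_mul]
    exact W'.zpow_mem hmem _
  have hρd1 : ρ ^ d ≠ 1 := by
    intro h1
    have h2 : orderOf ρ ∣ d := orderOf_dvd_of_pow_eq_one h1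
    have h3 : (orderOf ρ : ℤ) ∣ n0 - n0' := by
      rw [hgcd] at h2
      exact Int.natCast_dvd.2 (h2.trans (Nat.gcd_dvd_right _ _))
    rw [orderOf_dvd_iff_zpow_eq_one, ← hst] at h3
    apply hne
    rw [mul_eq_one_iff_eq_inv] at h3
    rw [h3]; exact ht.1.inv
  obtain ⟨n, hn, hb1, hb2⟩ := canon_bound cs s t hdih W' d hρd hρd1 s' hs
  obtain ⟨n', hn', hb1', hb2'⟩ := canon_bound cs s t hdih W' d hρd hρd1 t' ht
  refine ⟨n, n', hn, hn', ?_⟩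
  have hst2 : ρ ^ (n - n') = ρ ^ (n0 - n0') := by rw [← hst, hn, hn', refl_mul]
  have h4 : (d : ℤ) ∣ (n - n') - (n0 - n0') :=
    hdm.trans (orderOf_dvd_sub_iff_zpow_eq_zpow.2 hst2)
  have h5 : (d : ℤ) ∣ n0 - n0' := by
    rw [hgcd]; exact Int.natCast_dvd.2 (Nat.gcd_dvd_right _ _)
  have h6 : (d : ℤ) ∣ n - n' := by
    have := dvd_add h4 h5; simpa using this
  obtain ⟨c, hc⟩ := h6
  have hnn : n ≠ n' := by rintro rfl; exact hne (hn.trans hn'.symm)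
  have hc0 : c ≠ 0 := by rintro rfl; apply hnn; linarith
  have hdpos : (0 : ℤ) < d := by omega
  have c1 : c < 2 := by by_contra h; push Not at h; nlinarith
  have c2 : -2 < c := by by_contra h; push Not at h; nlinarith
  have : c = 1 ∨ c = -1 := by omega
  rcases this with rfl | rfl
  · left; linarith
  · right; linarith

/-! ### Representation part -/

lemma rep_mul_apply (R : PreRealization cs k V) (w w' : W) (u : V) :
    R.rep (w * w') u = R.rep w (R.rep w' u) := by rw [map_mul]; rfl

lemma rep_inv_cancel (R : PreRealization cs k V) (w : W) (u : V) :
    R.rep w⁻¹ (R.rep w u) = u := by rw [← rep_mul_apply]; simp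

lemma rep_cancel_inv (R : PreRealization cs k V) (w : W) (u : V) :
    R.rep w (R.rep w⁻¹ u) = u := by rw [← rep_mul_apply]; simp

lemma rep_refl (R : PreRealization cs k V) (w : W) (r : B) (u : V) :
    R.rep (w * cs.simple r * w⁻¹) u =
      u - dAct R w (R.root r) u • R.rep w (R.coroot r) := by
  rw [rep_mul_apply, rep_mul_apply, R.rep_simple, map_sub, map_smul, rep_cancel_inv]; rfl

lemma dAct_surj (R : PreRealization cs k V) (w : W) (r : B) (c : k) :
    ∃ u, dAct R w (R.root r) u = c := by
  obtain ⟨u, hu⟩ := R.root_surjective r c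
  exact ⟨R.rep w u, by rw [← hu]; simp [dAct, rep_inv_cancel]⟩

lemma dAct_rep (R : PreRealization cs k V) (w : W) (f : Module.Dual k V) (u : V) :
    dAct R w f (R.rep w u) = f u := by simp [dAct, rep_inv_cancel]

lemma zero_transfer (R : PreRealization cs k V) (w w2 : W) (r r2 : B)
    (h : w * cs.simple r * w⁻¹ = w2 * cs.simple r2 * w2⁻¹) (f : Module.Dual k V)
    (hf : f (R.rep w (R.coroot r)) = 0) : f (R.rep w2 (R.coroot r2)) = 0 := by
  obtain ⟨u, hu⟩ := dAct_surj R w2 r2 1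
  have h1 := rep_refl R w r u
  rw [h, rep_refl, hu, one_smul] at h1
  have h2 := congrArg f h1
  simpa [hf] using h2

lemma prod_transfer (R : PreRealization cs k V) (w w2 w3 : W) (r r2 r3 : B)
    (h : w * cs.simple r * w⁻¹ = w2 * cs.simple r2 * w2⁻¹) :
    dAct R w3 (R.root r3) (R.rep w (R.coroot r)) * dAct R w (R.root r) (R.rep w3 (R.coroot r3)) =
    dAct R w3 (R.root r3) (R.rep w2 (R.coroot r2)) *
      dAct R w2 (R.root r2) (R.rep w3 (R.coroot r3)) := by
  have h1 := rep_refl R w r (R.rep w3 (R.coroot r3))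
  rw [h, rep_refl] at h1
  have h2 := congrArg (dAct R w3 (R.root r3)) h1
  simp only [map_sub, map_smul, smul_eq_mul, sub_right_inj] at h2
  rw [mul_comm, ← h2, mul_comm]

/-- standard conjugators -/
def wn (cs : CoxeterSystem M W) (s t : B) (n : ℤ) : W := rot cs s t ^ ((n + 1) / 2)
/-- standard simple reflections -/
def rn (s t : B) (n : ℤ) : B := if Even n then s else t

lemma wn_even (cs : CoxeterSystem M W) (s t : B) (j : ℤ) :
    wn cs s t (2 * j) = rot cs s t ^ j ∧ rn s t (2 * j) = s := by
  refine ⟨by unfold wn; congr 1; omega, by simp [rn]⟩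

lemma wn_odd (cs : CoxeterSystem M W) (s t : B) (j : ℤ) :
    wn cs s t (2 * j - 1) = rot cs s t ^ j ∧ rn s t (2 * j - 1) = t := by
  refine ⟨by unfold wn; congr 1; omega, ?_⟩
  rw [rn, if_neg]; rw [Int.even_iff]; omega

lemma wn_refl (cs : CoxeterSystem M W) (s t : B) (n : ℤ) :
    wn cs s t n * cs.simple (rn s t n) * (wn cs s t n)⁻¹ = rot cs s t ^ n * cs.simple s := by
  rcases Int.even_or_odd' n with ⟨j, h | h⟩
  · rw [h, (wn_even cs s t j).1, (wn_even cs s t j).2]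
    rw [← zpow_neg, mul_assoc, s_rot, neg_neg, ← mul_assoc, ← zpow_add]; congr 2; omega
  · rw [show n = 2 * (j + 1) - 1 by omega, (wn_odd cs s t _).1, (wn_odd cs s t _).2]
    rw [← zpow_neg, rot_zpow_t, mul_assoc, s_rot, neg_neg, ← mul_assoc, ← zpow_add]; congr 2; omega

/-- standard coroots -/
def Cn (R : PreRealization cs k V) (s t : B) (n : ℤ) : V :=
  R.rep (wn cs s t n) (R.coroot (rn s t n))
/-- standard roots -/
def Dn (R : PreRealization cs k V) (s t : B) (n : ℤ) : Module.Dual k V :=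
  dAct R (wn cs s t n) (R.root (rn s t n))

lemma Cn_even (R : PreRealization cs k V) (s t : B) (j : ℤ) :
    Cn R s t (2 * j) = R.rep (rot cs s t ^ j) (R.coroot s) := by
  rw [Cn, (wn_even cs s t j).1, (wn_even cs s t j).2]
lemma Cn_odd (R : PreRealization cs k V) (s t : B) (j : ℤ) :
    Cn R s t (2 * j - 1) = R.rep (rot cs s t ^ j) (R.coroot t) := by
  rw [Cn, (wn_odd cs s t j).1, (wn_odd cs s t j).2]
lemma Dn_even (R : PreRealization cs k V) (s t : B) (j : ℤ) :
    Dn R s t (2 * j) = dAct R (rot cs s t ^ j) (R.root s) := by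
  rw [Dn, (wn_even cs s t j).1, (wn_even cs s t j).2]
lemma Dn_odd (R : PreRealization cs k V) (s t : B) (j : ℤ) :
    Dn R s t (2 * j - 1) = dAct R (rot cs s t ^ j) (R.root t) := by
  rw [Dn, (wn_odd cs s t j).1, (wn_odd cs s t j).2]

lemma rep_simple_self (R : PreRealization cs k V) (i : B) :
    R.rep (cs.simple i) (R.coroot i) = - R.coroot i := by
  rw [R.rep_simple, R.root_coroot_eq_two, two_smul]; abel

lemma rep_rot_t (R : PreRealization cs k V) (s t : B) :
    R.rep (rot cs s t) (R.coroot t) = cartanS R t s • R.coroot s - R.coroot t := by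
  rw [rot, rep_mul_apply, rep_simple_self, map_neg, R.rep_simple, cartanS]; abel

lemma rep_rot_inv_s (R : PreRealization cs k V) (s t : B) :
    R.rep (rot cs s t)⁻¹ (R.coroot s) = cartanS R s t • R.coroot t - R.coroot s := by
  rw [rot, mul_inv_rev, cs.inv_simple, cs.inv_simple, rep_mul_apply, rep_simple_self, map_neg,
    R.rep_simple, cartanS]; abel

lemma Cn_rec_even (R : PreRealization cs k V) (s t : B) (j : ℤ) :
    Cn R s t (2 * j + 1) + Cn R s t (2 * j - 1) = cartanS R t s • Cn R s t (2 * j) := by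
  rw [show 2 * j + 1 = 2 * (j + 1) - 1 by ring, Cn_odd, Cn_odd, Cn_even, zpow_add_one,
    rep_mul_apply, rep_rot_t, map_sub, map_smul]; abel

lemma Cn_rec_odd (R : PreRealization cs k V) (s t : B) (j : ℤ) :
    Cn R s t (2 * j) + Cn R s t (2 * j - 2) = cartanS R s t • Cn R s t (2 * j - 1) := by
  rw [show 2 * j - 2 = 2 * (j - 1) by ring, Cn_odd, Cn_even, Cn_even, zpow_sub_one,
    rep_mul_apply, rep_rot_inv_s, map_sub, map_smul]; abel

/-- expected pairing -/
def tform (a b : k) (n e : ℤ) : k := if Even n then pev a b (twX e) else pev a b (twY e)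

lemma tform_rec (a b : k) (n e : ℤ) :
    tform a b (n + 1) (e + 1) + tform a b (n - 1) (e - 1) =
      (if Even n then b else a) * tform a b n e := by
  have h := tw_rec e
  have p1 : pev a b (twX (e + 1)) = a * pev a b (twY e) - pev a b (twX (e - 1)) := by
    rw [h.1]; simp [pev, varX]
  have p2 : pev a b (twY (e + 1)) = b * pev a b (twX e) - pev a b (twY (e - 1)) := by
    rw [h.2]; simp [pev, varY]
  unfold tform
  by_cases hn : Even n
  · have h1 : ¬ Even (n + 1) := by rw [Int.even_iff] at *; omega
    have h2 : ¬ Even (n - 1) := by rw [Int.even_iff] at *; omega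
    simp only [hn, h1, h2, if_true, if_false, p2]; ring
  · have h1 : Even (n + 1) := by rw [Int.even_iff] at *; omega
    have h2 : Even (n - 1) := by rw [Int.even_iff] at *; omega
    simp only [hn, h1, h2, if_true, if_false, p1]; ring

lemma Cn_rec (R : PreRealization cs k V) (s t : B) (n : ℤ) :
    Cn R s t (n + 1) + Cn R s t (n - 1) =
      (if Even n then cartanS R t s else cartanS R s t) • Cn R s t n := by
  rcases Int.even_or_odd' n with ⟨j, h | h⟩
  · rw [if_pos (by rw [Int.even_iff]; omega), h]; exact Cn_rec_even R s t j
  · rw [if_neg (by rw [Int.even_iff]; omega), show n = 2 * (j + 1) - 1 by omega,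
      show 2 * (j + 1) - 1 + 1 = 2 * (j + 1) by ring,
      show 2 * (j + 1) - 1 - 1 = 2 * (j + 1) - 2 by ring]
    exact Cn_rec_odd R s t _

lemma pairing_aux (R : PreRealization cs k V) (s t : B) (n' e : ℤ) :
    Dn R s t n' (Cn R s t (n' + e)) = tform (cartanS R s t) (cartanS R t s) (n' + e) e ∧
    Dn R s t n' (Cn R s t (n' + e + 1)) =
      tform (cartanS R s t) (cartanS R t s) (n' + e + 1) (e + 1) := by
  have step : ∀ e : ℤ, Dn R s t n' (Cn R s t (n' + e + 1)) + Dn R s t n' (Cn R s t (n' + e - 1)) =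
      (if Even (n' + e) then cartanS R t s else cartanS R s t) *
        Dn R s t n' (Cn R s t (n' + e)) := by
    intro e
    rw [← map_add, Cn_rec, map_smul, smul_eq_mul]
  induction e using Int.induction_on with
  | zero =>
    constructor
    · rw [add_zero, Dn, Cn, dAct_rep, R.root_coroot_eq_two]
      simp [tform, tw_zero, pev]
    · rw [add_zero, zero_add]
      rcases Int.even_or_odd' n' with ⟨j, h | h⟩
      · rw [tform, if_neg (by rw [Int.even_iff]; omega), h,
          show 2 * j + 1 = 2 * (j + 1) - 1 by ring, Dn_even, Cn_odd, zpow_add_one, rep_mul_apply,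
          dAct_rep, rep_rot_t, map_sub, map_smul, R.root_coroot_eq_two, tw_one.2]
        simp [pev, varY, cartanS]; ring
      · rw [tform, if_pos (by rw [Int.even_iff]; omega),
          show n' = 2 * (j + 1) - 1 by omega,
          show 2 * (j + 1) - 1 + 1 = 2 * (j + 1) by ring, Dn_odd, Cn_even, dAct_rep, tw_one.1]
        simp [pev, varX, cartanS]
  | succ e ih =>
    obtain ⟨h1, h2⟩ := ih
    rw [← add_assoc]
    refine ⟨h2, ?_⟩
    have h3 := step (e + 1)
    have h4 := tform_rec (cartanS R s t) (cartanS R t s) (n' + (e + 1)) (e + 1)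
    simp only [← add_assoc, add_sub_cancel_right] at h3 h4
    rw [h2, ← h4, h1] at h3
    exact add_right_cancel h3
  | pred e ih =>
    obtain ⟨h1, h2⟩ := ih
    have h3 := step (-e)
    have h4 := tform_rec (cartanS R s t) (cartanS R t s) (n' + (-e)) (-e)
    rw [h2, h1, ← h4] at h3
    have h5 := add_left_cancel h3
    rw [← add_sub_assoc, sub_add_cancel, sub_add_cancel]
    exact ⟨h5, h1⟩

lemma pairing (R : PreRealization cs k V) (s t : B) (n n' : ℤ) :
    Dn R s t n' (Cn R s t n) = tform (cartanS R s t) (cartanS R t s) n (n - n') := by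
  have := (pairing_aux R s t n' (n - n')).1
  rwa [add_sub_cancel] at this

lemma dAct_mul (R : PreRealization cs k V) (w w' : W) (f : Module.Dual k V) :
    dAct R (w * w') f = dAct R w (dAct R w' f) := by
  ext u; simp [dAct]

lemma dAct_simple_self (R : PreRealization cs k V) (i : B) :
    dAct R (cs.simple i) (R.root i) = - R.root i := by
  ext u; simp [dAct, R.rep_simple, R.root_coroot_eq_two]; ring

lemma dAct_neg (R : PreRealization cs k V) (w : W) (f : Module.Dual k V) :
    dAct R w (-f) = - dAct R w f := by
  ext u; simp [dAct]

/-- every datum is, up to sign, standard -/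
lemma datum_std (R : PreRealization cs k V) (s t : B) (hdih : ∀ i : B, i = s ∨ i = t)
    (w : W) (r : B) : ∃ (n : ℤ) (ε : k), ε * ε = 1 ∧
      w * cs.simple r * w⁻¹ = rot cs s t ^ n * cs.simple s ∧
      R.rep w (R.coroot r) = ε • Cn R s t n ∧ dAct R w (R.root r) = ε • Dn R s t n := by
  have main : ∀ n : ℤ, w = wn cs s t n ∨ w = wn cs s t n * cs.simple r → r = rn s t n →
      ∃ (n : ℤ) (ε : k), ε * ε = 1 ∧
      w * cs.simple r * w⁻¹ = rot cs s t ^ n * cs.simple s ∧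
      R.rep w (R.coroot r) = ε • Cn R s t n ∧ dAct R w (R.root r) = ε • Dn R s t n := by
    rintro n (h | h) hr
    · refine ⟨n, 1, by ring, ?_, ?_, ?_⟩
      · rw [← wn_refl, h, hr]
      · rw [h, hr, one_smul]; rfl
      · rw [h, hr, one_smul]; rfl
    · refine ⟨n, -1, by ring, ?_, ?_, ?_⟩
      · rw [← wn_refl, h, ← hr]; simp [mul_assoc]
      · rw [h, rep_mul_apply, rep_simple_self, map_neg, neg_one_smul, Cn, ← hr]
      · rw [h, dAct_mul, dAct_simple_self, dAct_neg, Dn, ← hr]; ext u; simp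
  rcases elt_form cs s t hdih w with ⟨j, h⟩ | ⟨j, h⟩ <;> rcases hdih r with hr | hr
  · exact main (2 * j) (Or.inl (h.trans (wn_even cs s t j).1.symm))
      (hr.trans (wn_even cs s t j).2.symm)
  · exact main (2 * j - 1) (Or.inl (h.trans (wn_odd cs s t j).1.symm))
      (hr.trans (wn_odd cs s t j).2.symm)
  · exact main (2 * j) (Or.inr (by rw [(wn_even cs s t j).1, h, hr]))
      (hr.trans (wn_even cs s t j).2.symm)
  · exact main (2 * (j + 1) - 1) (Or.inr (by
      rw [(wn_odd cs s t _).1, h, hr, rot_zpow_t, add_sub_cancel_right]))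
      (hr.trans (wn_odd cs s t _).2.symm)

lemma tform_neg (a b : k) (n e : ℤ) : tform a b n (-e) = tform a b n e := by
  simp [tform, twX_neg, twY_neg]

theorem statement_11 [IsDomain k] [Module.Free k V] [Module.Finite k V]
    (cs : CoxeterSystem M W) (s t : B) (hst : s ≠ t)
    (hdih : ∀ i : B, i = s ∨ i = t)
    (hm : orderOf (cs.simple s * cs.simple t) ≠ 0)
    (R : PreRealization cs k V)
    (W' : Subgroup W) (hW' : IsReflectionSubgroup cs W')
    (s' t' : W) (hne : s' ≠ t')
    (hcan : canonicalGens cs (W' : Set W) = {s', t'})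
    (hv : orderOf (s' * t') ≠ 0)
    (hdvd : orderOf (s' * t') ∣ orderOf (cs.simple s * cs.simple t))
    (hvanish : ∀ j : ℕ, 1 ≤ j → j ≤ orderOf (s' * t') - 1 →
      pev (cartanS R s t) (cartanS R t s)
          (twist ((orderOf (cs.simple s * cs.simple t) / orderOf (s' * t') : ℕ) : ℤ)
            (qbinomX (orderOf (s' * t')) j)) = 0 ∧
      pev (cartanS R s t) (cartanS R t s)
          (twist ((orderOf (cs.simple s * cs.simple t) / orderOf (s' * t') : ℕ) : ℤ)
            (qbinomY (orderOf (s' * t')) j)) = 0) :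
    ∀ (wm : W → W) (rm : W → B),
      IsReflectionDatum cs (canonicalGens cs (W' : Set W)) wm rm →
      ∀ j : ℕ, 1 ≤ j → j ≤ orderOf (s' * t') - 1 →
        pev (cartan R wm rm s' t') (cartan R wm rm t' s')
            (qbinomX (orderOf (s' * t')) j) = 0 ∧
        pev (cartan R wm rm s' t') (cartan R wm rm t' s')
            (qbinomY (orderOf (s' * t')) j) = 0 := by
  intro wm rm hdat j hj1 hj2
  change orderOf (rot cs s t) ≠ 0 at hm
  change orderOf (s' * t') ∣ orderOf (rot cs s t) at hdvd
  have hs : s' ∈ canonicalGens cs (W' : Set W) := by rw [hcan]; simp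
  have ht : t' ∈ canonicalGens cs (W' : Set W) := by rw [hcan]; simp
  obtain ⟨v1, v2⟩ := hvanish j hj1 hj2
  change pev _ _ (twist ((orderOf (rot cs s t) / orderOf (s' * t') : ℕ) : ℤ) _) = 0 at v1 v2
  rw [pev_twist] at v1 v2
  obtain ⟨p, p', hp, hp', hpd⟩ := canon_diff cs s t hdih hm W' s' t' hne hs ht
  set d := orderOf (rot cs s t) / orderOf (s' * t') with hd
  obtain ⟨n, ε, hε, hn, hC, hD⟩ := datum_std R s t hdih (wm s') (rm s')
  obtain ⟨n', ε', hε', hn', hC', hD'⟩ := datum_std R s t hdih (wm t') (rm t')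
  rw [← (hdat s' hs).1] at hn
  rw [← (hdat t' ht).1] at hn'
  set a := cartanS R s t with ha
  set b := cartanS R t s with hb
  have ea : cartan R wm rm s' t' = ε * ε' * Dn R s t n' (Cn R s t n) := by
    rw [cartan, datumRoot, datumCoroot, hC, hD']
    simp only [LinearMap.smul_apply, map_smul, smul_eq_mul]; ring
  have eb : cartan R wm rm t' s' = ε * ε' * Dn R s t n (Cn R s t n') := by
    rw [cartan, datumRoot, datumCoroot, hC', hD]
    simp only [LinearMap.smul_apply, map_smul, smul_eq_mul]; ring
  have q1 : rot cs s t ^ p = rot cs s t ^ n := mul_right_cancel (hp.symm.trans hn)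
  have q2 : rot cs s t ^ p' = rot cs s t ^ n' := mul_right_cancel (hp'.symm.trans hn')
  -- shifted indices
  have r1 : rot cs s t ^ (n' + (p - p')) = rot cs s t ^ n := by
    rw [zpow_add, zpow_sub, ← q1, q2]; group
  have r2 : rot cs s t ^ (n - (p - p')) = rot cs s t ^ n' := by
    rw [sub_eq_add_neg, neg_sub, zpow_add, zpow_sub, ← q2, q1]; group
  have tf : ∀ i : ℤ, tform a b i (p - p') = tform a b i d := by
    intro i
    rcases hpd with h | h <;> rw [h]
    exact tform_neg _ _ _ _
  have R1 : wn cs s t (n' + (p - p')) * cs.simple (rn s t (n' + (p - p'))) *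
      (wn cs s t (n' + (p - p')))⁻¹ = wn cs s t n * cs.simple (rn s t n) * (wn cs s t n)⁻¹ := by
    rw [wn_refl, wn_refl, r1]
  have R2 : wn cs s t (n - (p - p')) * cs.simple (rn s t (n - (p - p'))) *
      (wn cs s t (n - (p - p')))⁻¹ = wn cs s t n' * cs.simple (rn s t n') * (wn cs s t n')⁻¹ := by
    rw [wn_refl, wn_refl, r2]
  refine transfer _ _ _ _ ?_ ?_ _ j (by omega) v1 v2
  · have h1 := prod_transfer R _ _ (wn cs s t n') _ _ (rn s t n') R1
    change Dn R s t n' (Cn R s t (n' + (p - p'))) * Dn R s t (n' + (p - p')) (Cn R s t n') =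
      Dn R s t n' (Cn R s t n) * Dn R s t n (Cn R s t n') at h1
    rw [ea, eb]
    have h2 : ∀ x y : k, ε * ε' * x * (ε * ε' * y) = x * y := by
      intro x y
      linear_combination (ε' * ε' * x * y) * hε + x * y * hε'
    rw [h2, ← h1, pairing, pairing, add_sub_cancel_left,
      show n' - (n' + (p - p')) = -(p - p') by ring, tform_neg, tf, tf]
    have hpar : ((p - p') % 2 = 0 ↔ Even d) := by
      rw [Nat.even_iff]; omega
    by_cases hde : Even d
    · have := tw_even hde
      simp [tform, this]
    · have hpe := hpar.not.2 hde
      by_cases hn2 : Even n'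
      · have : ¬ Even (n' + (p - p')) := by rw [Int.even_iff] at *; omega
        simp [tform, hn2, this, mul_comm]
      · have : Even (n' + (p - p')) := by rw [Int.even_iff] at *; omega
        simp [tform, hn2, this]
  · intro X0 Y0
    have z : ∀ i : ℤ, tform a b i d = 0 := by
      intro i; unfold tform; split_ifs <;> assumption
    constructor
    · have h1 := zero_transfer R _ _ _ _ R1 (Dn R s t n') (by
        change Dn R s t n' (Cn R s t (n' + (p - p'))) = 0
        rw [pairing, add_sub_cancel_left, tf, z])
      change Dn R s t n' (Cn R s t n) = 0 at h1
      rw [ea, h1, mul_zero]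
    · have h1 := zero_transfer R _ _ _ _ R2 (Dn R s t n) (by
        change Dn R s t n (Cn R s t (n - (p - p'))) = 0
        rw [pairing, show n - (p - p') - n = -(p - p') by ring, tform_neg, tf, z])
      change Dn R s t n (Cn R s t n') = 0 at h1
      rw [eb, h1, mul_zero]

end PaperStmt
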